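/- A strategyproof SDS f is γ-randomly dictatorial if and only if there exist non-negative reals γ_1,…,γ_n such that: (i) ∑_{i∈N} γ_i = γ; (ii) f(R^{i:yx}, y) − f(R, y) ≥ γ_i for all alternatives x,y ∈ A, all voters i, and all profiles R in which voter i ranks x first and y second; and (iii) for every voter i there exist alternatives x, y and a profile R in which voter i ranks x first and y second with f(R^{i:yx}, y) − f(R, y) = γ_i. -/

import Mathlib

open Finset

noncomputable section

/-- A preference profile: each voter's strict linear order on the `m`
alternatives is encoded as a ranking permutation, where `R i x` is the rank of
alternative `x` for voter `i` (rank `0` = most preferred). Voter `i` strictly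
prefers `x` to `y` iff `R i x < R i y`. -/
abbrev Profile (n m : ℕ) := Fin n → Equiv.Perm (Fin m)

/-- `F R x` is the probability that the social decision scheme `F` assigns to
alternative `x` at profile `R`; `IsSDS F` says every `F R` is a lottery. -/
def IsSDS {n m : ℕ} (F : Profile n m → Fin m → ℝ) : Prop :=
  (∀ R x, 0 ≤ F R x) ∧ ∀ R, ∑ x, F R x = 1

/-- Stochastic-dominance preference of voter `i` (with preferences as in `R`):
lottery `p` is weakly preferred to lottery `q`. -/
def SDPref {n m : ℕ} (R : Profile n m) (i : Fin n) (p q : Fin m → ℝ) : Prop :=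
  ∀ x : Fin m,
    ∑ y ∈ univ.filter (fun y => R i y < R i x), q y ≤
      ∑ y ∈ univ.filter (fun y => R i y < R i x), p y

/-- Strategyproofness: the truthful outcome is SD-preferred to any outcome
obtainable by a unilateral deviation. -/
def Strategyproof {n m : ℕ} (F : Profile n m → Fin m → ℝ) : Prop :=
  ∀ (R R' : Profile n m) (i : Fin n),
    (∀ j, j ≠ i → R j = R' j) → SDPref R i (F R) (F R')

/-- Anonymity: permuting the voters does not change the outcome. -/
def Anonymous {n m : ℕ} (F : Profile n m → Fin m → ℝ) : Prop :=
  ∀ (π : Equiv.Perm (Fin n)) (R : Profile n m), F (fun i => R (π i)) = F R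

/-- The profile obtained from `R` by relabeling the alternatives by `τ`
(in `relabel τ R`, alternative `τ x` gets the rank that `x` has in `R`). -/
def relabel {n m : ℕ} (τ : Equiv.Perm (Fin m)) (R : Profile n m) : Profile n m :=
  fun i => τ.symm.trans (R i)

/-- Neutrality: relabeling the alternatives permutes the outcome accordingly. -/
def Neutral {n m : ℕ} (F : Profile n m → Fin m → ℝ) : Prop :=
  ∀ (τ : Equiv.Perm (Fin m)) (R : Profile n m) (x : Fin m),
    F (relabel τ R) (τ x) = F R x

/-- The supporting size `n_{xy}(R)`: the number of voters preferring `x` to `y`. -/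
def suppSize {n m : ℕ} (R : Profile n m) (x y : Fin m) : ℕ :=
  (univ.filter (fun i => R i x < R i y)).card

/-- `x` is the Condorcet winner of `R`. -/
def CondorcetWinner {n m : ℕ} (R : Profile n m) (x : Fin m) : Prop :=
  ∀ y, y ≠ x → suppSize R y x < suppSize R x y

/-- `α`-Condorcet-consistency. -/
def CondorcetConsistent {n m : ℕ} (F : Profile n m → Fin m → ℝ) (α : ℝ) : Prop :=
  ∀ R x, CondorcetWinner R x → α ≤ F R x

/-- `x` is Pareto-dominated in `R`. -/
def ParetoDominated {n m : ℕ} (R : Profile n m) (x : Fin m) : Prop :=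
  ∃ y, ∀ i, R i y < R i x

/-- `β`-ex post efficiency. -/
def ExPostEff {n m : ℕ} (F : Profile n m → Fin m → ℝ) (β : ℝ) : Prop :=
  ∀ R x, ParetoDominated R x → F R x ≤ β

/-- The probability that the dictatorial SDS of voter `i` assigns to `x`:
`1` if `x` is voter `i`'s most preferred alternative and `0` otherwise. -/
def dictProb {n m : ℕ} (R : Profile n m) (i : Fin n) (x : Fin m) : ℝ :=
  if ∀ y, R i x ≤ R i y then 1 else 0

/-- `d` is a random dictatorship. -/
def IsRandDict {n m : ℕ} (d : Profile n m → Fin m → ℝ) : Prop :=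
  ∃ δ : Fin n → ℝ, (∀ i, 0 ≤ δ i) ∧ ∑ i, δ i = 1 ∧
    ∀ R x, d R x = ∑ i, δ i * dictProb R i x

/-- `F` can be written as `γ d + (1 - γ) g` with `d` a random dictatorship and
`g` a strategyproof SDS. -/
def DecomposesAt {n m : ℕ} (F : Profile n m → Fin m → ℝ) (γ : ℝ) : Prop :=
  ∃ d g : Profile n m → Fin m → ℝ, IsRandDict d ∧ IsSDS g ∧ Strategyproof g ∧
    ∀ R x, F R x = γ * d R x + (1 - γ) * g R x

/-- `F` is `γ`-randomly dictatorial: `γ ∈ [0,1]` is the maximal value admitting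
a decomposition `F = γ d + (1 - γ) g` as above. -/
def RandDictDegree {n m : ℕ} (F : Profile n m → Fin m → ℝ) (γ : ℝ) : Prop :=
  0 ≤ γ ∧ γ ≤ 1 ∧ DecomposesAt F γ ∧
    ∀ γ', 0 ≤ γ' → γ' ≤ 1 → DecomposesAt F γ' → γ' ≤ γ

/-- The profile `R^{i:yx}` obtained from `R` by swapping `x` and `y` in voter
`i`'s preference relation (used when `x` is ranked directly above `y`). -/
def swapTop {n m : ℕ} (R : Profile n m) (i : Fin n) (x y : Fin m) : Profile n m :=
  Function.update R i ((R i).trans (Equiv.swap (R i x) (R i y)))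

/-- The weight vector `b` defining the randomized Copeland rule:
`b k = 2/(m(m-1))` for `k > n/2`, `b k = 1/(m(m-1))` for `k = n/2`, `b k = 0`
for `k < n/2`. -/
def copelandWeight (n m : ℕ) (k : ℕ) : ℝ :=
  if n < 2 * k then 2 / ((m : ℝ) * ((m : ℝ) - 1))
  else if 2 * k = n then 1 / ((m : ℝ) * ((m : ℝ) - 1))
  else 0

/-- The randomized Copeland rule `f_C(R, x) = ∑_{y ≠ x} b_{n_{xy}(R)}`. -/
def randCopeland (n m : ℕ) : Profile n m → Fin m → ℝ :=
  fun R x => ∑ y ∈ univ.filter (fun y => y ≠ x), copelandWeight n m (suppSize R x y)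

/-- A point voting SDS, given by a scoring vector `a` (indexed by ranks
`0, …, m-1`, i.e. `a k` is the score of the `(k+1)`-st ranked alternative). -/
structure PointVoting (n m : ℕ) where
  a : ℕ → ℝ
  mono : ∀ k l : ℕ, k ≤ l → l < m → a l ≤ a k
  nonneg : ∀ k : ℕ, k < m → 0 ≤ a k
  sum_eq : ∑ k ∈ Finset.range m, a k = 1 / (n : ℝ)

/-- The value of a point voting SDS. -/
def pvVal {n m : ℕ} (pv : PointVoting n m) : Profile n m → Fin m → ℝ :=
  fun R x => ∑ i, pv.a (R i x : ℕ)

/-- A supporting size SDS, given by a vector `b` indexed by supporting sizes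
`0, …, n`. -/
structure SupportingSize (n m : ℕ) where
  b : ℕ → ℝ
  mono : ∀ k l : ℕ, k ≤ l → l ≤ n → b k ≤ b l
  nonneg : ∀ k : ℕ, k ≤ n → 0 ≤ b k
  pair_eq : ∀ k : ℕ, k ≤ n → b k + b (n - k) = 2 / ((m : ℝ) * ((m : ℝ) - 1))

/-- The value of a supporting size SDS. -/
def ssVal {n m : ℕ} (S : SupportingSize n m) : Profile n m → Fin m → ℝ :=
  fun R x => ∑ y ∈ univ.filter (fun y => y ≠ x), S.b (suppSize R x y)

/-- A duple: a strategyproof SDS that puts positive probability on at most two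
fixed alternatives. -/
def IsDuple {n m : ℕ} (g : Profile n m → Fin m → ℝ) : Prop :=
  IsSDS g ∧ Strategyproof g ∧ ∃ x y : Fin m, ∀ R z, z ≠ x → z ≠ y → g R z = 0

/-- A unilateral: a strategyproof SDS that depends only on the preferences of a
single fixed voter. -/
def IsUnilateral {n m : ℕ} (g : Profile n m → Fin m → ℝ) : Prop :=
  IsSDS g ∧ Strategyproof g ∧
    ∃ i : Fin n, ∀ R R' : Profile n m, R i = R' i → g R = g R'

/-- `F` is a convex combination of SDSs satisfying the property `P`. -/
def MixOf {n m : ℕ} (P : (Profile n m → Fin m → ℝ) → Prop)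
    (F : Profile n m → Fin m → ℝ) : Prop :=
  ∃ (K : ℕ) (w : Fin K → ℝ) (g : Fin K → Profile n m → Fin m → ℝ),
    (∀ k, 0 ≤ w k) ∧ ∑ k, w k = 1 ∧ (∀ k, P (g k)) ∧
    ∀ R x, F R x = ∑ k, w k * g k R x

/-- The uniform random dictatorship. -/
def uniformRD (n m : ℕ) : Profile n m → Fin m → ℝ :=
  fun R x => (1 / (n : ℝ)) * ∑ i, dictProb R i x

/-- The uniform lottery. -/
def uniformLottery (n m : ℕ) : Profile n m → Fin m → ℝ :=
  fun _ _ => 1 / (m : ℝ)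

/-!
For voter `i`, let `c i` be the least gain in probability that an alternative ranked second by `i`
can make when `i` moves it to the top; we show that the degree is `∑ i, c i`.

It is no larger: in any decomposition `γ d + (1 - γ) g`, a dictatorship of weight `γ δ i` gains
exactly `γ δ i` in such a swap, while strategyproofness of `g` makes the remaining gain nonnegative.

It is attained: subtract from `F` the dictatorships with weights `c i` and rescale. The difference
is nonnegative because demoting `x` voter by voter costs `x` at least `c i` each time. It is still
strategyproof because a deviation of `i` that replaces the favorite `w` by `z` can be routed through
two rankings that start with `w, z` and `z, w`, and the swap between them pays for the weight `c i`
that the dictatorship moves.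
-/

section TopSet

variable {m : ℕ} {σ : Equiv.Perm (Fin m)} {U : Finset (Fin m)} {x y z : Fin m}

theorem exists_rank_eq (σ : Equiv.Perm (Fin m)) {k : ℕ} (hk : k < m) : ∃ x, (σ x : ℕ) = k :=
  ⟨σ.symm ⟨k, hk⟩, by simp⟩

theorem rank_lt_of_rank_eq_zero (hx : (σ x : ℕ) = 0) (hyx : y ≠ x) : σ x < σ y := by
  rw [Fin.lt_def, hx]
  exact Nat.pos_of_ne_zero fun hy => hyx (σ.injective (Fin.ext (hy.trans hx.symm)))

theorem rank_eq_zero_iff_eq (hx : (σ x : ℕ) = 0) : (σ y : ℕ) = 0 ↔ x = y :=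
  ⟨fun hy => σ.injective (Fin.ext (hx.trans hy.symm)), fun h => h ▸ hx⟩

/-- `U` consists of the best `#U` alternatives of the ranking `σ`. Unlike the sets
`{y | σ y < σ x}` in `SDPref`, the set of all alternatives is included. -/
def IsTopSet (σ : Equiv.Perm (Fin m)) (U : Finset (Fin m)) : Prop :=
  ∀ a ∈ U, ∀ b ∉ U, σ a < σ b

theorem isTopSet_filter_lt (σ : Equiv.Perm (Fin m)) (x : Fin m) :
    IsTopSet σ (univ.filter fun y => σ y < σ x) := by
  intro a ha b hb
  simp only [mem_filter, mem_univ, true_and, not_lt] at ha hb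
  exact ha.trans_le hb

theorem isTopSet_singleton (hx : (σ x : ℕ) = 0) : IsTopSet σ {x} := by
  intro a ha b hb
  rw [mem_singleton] at ha hb
  exact ha ▸ rank_lt_of_rank_eq_zero hx hb

theorem IsTopSet.mem_of_rank_eq_zero (hU : IsTopSet σ U) (hy : y ∈ U) (hx : (σ x : ℕ) = 0) :
    x ∈ U := by
  by_contra hxU
  have hyx : (σ y : ℕ) < σ x := hU y hy x hxU
  omega

theorem IsTopSet.eq_univ_or_eq_filter_lt (hU : IsTopSet σ U) :
    U = univ ∨ ∃ x, U = univ.filter fun y => σ y < σ x := by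
  rcases Uᶜ.eq_empty_or_nonempty with hempty | hne
  · exact .inl (compl_eq_empty_iff U |>.mp hempty)
  · obtain ⟨x, hx, hmin⟩ := exists_min_image Uᶜ σ hne
    refine .inr ⟨x, ?_⟩
    ext y
    simp only [mem_filter, mem_univ, true_and]
    refine ⟨fun hy => hU y hy x (mem_compl.mp hx), fun hyx => ?_⟩
    by_contra hy
    exact (hmin y (mem_compl.mpr hy)).not_gt hyx

theorem IsTopSet.trans_swap (hU : IsTopSet σ U) (hx : x ∈ U) (hy : y ∈ U) :
    IsTopSet (σ.trans (Equiv.swap (σ x) (σ y))) U := by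
  intro a ha b hb
  simp only [Equiv.trans_apply]
  rw [Equiv.swap_apply_of_ne_of_ne (hU x hx b hb).ne' (hU y hy b hb).ne', Equiv.swap_apply_def]
  split_ifs
  exacts [hU y hy b hb, hU x hx b hb, hU a ha b hb]

/-- The ranking obtained from `σ` by moving `z` to the top and keeping the order of all other
alternatives. -/
def moveToTop (σ : Equiv.Perm (Fin m)) (z : Fin m) : Equiv.Perm (Fin m) :=
  σ.trans (Fin.cycleRange (σ z))

theorem moveToTop_self (σ : Equiv.Perm (Fin m)) (z : Fin m) : (moveToTop σ z z : ℕ) = 0 := by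
  simp [moveToTop, Fin.coe_cycleRange_of_le]

theorem moveToTop_of_rank_eq_zero (hx : (σ x : ℕ) = 0) (hzx : z ≠ x) :
    (moveToTop σ z x : ℕ) = 1 := by
  rw [moveToTop, Equiv.trans_apply, Fin.coe_cycleRange_of_lt (rank_lt_of_rank_eq_zero hx hzx), hx]

theorem moveToTop_lt_moveToTop (hxy : σ x < σ y) (hyz : y ≠ z) :
    moveToTop σ z x < moveToTop σ z y := by
  simp only [moveToTop, Equiv.trans_apply, Fin.lt_def]
  rcases lt_or_gt_of_ne (σ.injective.ne hyz) with hy | hy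
  · rw [Fin.coe_cycleRange_of_lt hy, Fin.coe_cycleRange_of_lt (hxy.trans hy)]
    exact Nat.succ_lt_succ hxy
  rw [Fin.cycleRange_of_gt hy]
  rcases le_or_gt (σ x) (σ z) with hx | hx
  · rw [Fin.coe_cycleRange_of_le hx]
    split_ifs <;> omega
  · rwa [Fin.cycleRange_of_gt hx]

theorem IsTopSet.insert_moveToTop (hU : IsTopSet σ U) (z : Fin m) :
    IsTopSet (moveToTop σ z) (insert z U) := by
  intro a ha b hb
  rw [mem_insert, not_or] at hb
  rcases mem_insert.mp ha with rfl | ha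
  · exact rank_lt_of_rank_eq_zero (moveToTop_self σ a) hb.1
  · exact moveToTop_lt_moveToTop (hU a ha b hb.2) hb.1

end TopSet

section Swap

variable {n m : ℕ} (R : Profile n m) (i : Fin n) (x y : Fin m)

theorem swapTop_self : swapTop R i x y i = (R i).trans (Equiv.swap (R i x) (R i y)) :=
  Function.update_self ..

theorem swapTop_of_ne {j : Fin n} (hj : j ≠ i) : swapTop R i x y j = R j :=
  Function.update_of_ne hj ..

theorem swapTop_apply_left : swapTop R i x y i x = R i y := by
  simp [swapTop_self]

theorem swapTop_apply_right : swapTop R i x y i y = R i x := by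
  simp [swapTop_self]

theorem swapTop_swapTop : swapTop (swapTop R i x y) i y x = R := by
  funext j
  rcases eq_or_ne j i with rfl | hj
  · ext z
    simp [swapTop_self]
  · rw [swapTop_of_ne _ _ _ _ hj, swapTop_of_ne _ _ _ _ hj]

end Swap

section Strategyproof

variable {n m : ℕ} {F : Profile n m → Fin m → ℝ} {R R' : Profile n m} {i : Fin n}
  {U : Finset (Fin m)} {x z : Fin m}

theorem SDPref.sum_le_sum_of_isTopSet {p q : Fin m → ℝ} (h : SDPref R i p q)
    (hpq : ∑ y, q y = ∑ y, p y) (hU : IsTopSet (R i) U) : ∑ y ∈ U, q y ≤ ∑ y ∈ U, p y := by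
  rcases hU.eq_univ_or_eq_filter_lt with rfl | ⟨x, rfl⟩
  exacts [hpq.le, h x]

theorem Strategyproof.sum_le_sum_of_isTopSet (hsp : Strategyproof F) (hF : IsSDS F)
    (hR : ∀ j ≠ i, R j = R' j) (hU : IsTopSet (R i) U) :
    ∑ y ∈ U, F R' y ≤ ∑ y ∈ U, F R y :=
  (hsp R R' i hR).sum_le_sum_of_isTopSet ((hF.2 R').trans (hF.2 R).symm) hU

theorem Strategyproof.apply_le_apply_of_rank_eq_zero (hsp : Strategyproof F) (hF : IsSDS F)
    (hR : ∀ j ≠ i, R j = R' j) (hx : (R i x : ℕ) = 0) : F R' x ≤ F R x := by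
  simpa using hsp.sum_le_sum_of_isTopSet hF hR (isTopSet_singleton hx)

theorem Strategyproof.sum_le_sum_of_isTopSet_insert (hsp : Strategyproof F) (hF : IsSDS F)
    (hR : ∀ j ≠ i, R j = R' j) (hU : IsTopSet (R i) (insert z U)) (hzU : z ∉ U)
    (hz : (R' i z : ℕ) = 0) : ∑ y ∈ U, F R' y ≤ ∑ y ∈ U, F R y := by
  have hinsert := hsp.sum_le_sum_of_isTopSet hF hR hU
  have hpoint := hsp.apply_le_apply_of_rank_eq_zero hF (fun j hj => (hR j hj).symm) hz
  rw [sum_insert hzU, sum_insert hzU] at hinsert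
  linarith

theorem Strategyproof.div_const (hsp : Strategyproof F) {a : ℝ} (ha : 0 ≤ a) :
    Strategyproof fun R x => F R x / a := by
  intro R R' i hR x
  simp only [← sum_div]
  exact div_le_div_of_nonneg_right (hsp R R' i hR x) ha

end Strategyproof

section DictMix

variable {n m : ℕ}

theorem dictProb_eq_ite_rank (R : Profile n m) (i : Fin n) (x : Fin m) :
    dictProb R i x = if (R i x : ℕ) = 0 then 1 else 0 := by
  have htop : (∀ y, R i x ≤ R i y) ↔ (R i x : ℕ) = 0 := by
    refine ⟨fun h => ?_, fun h y => by rw [Fin.le_def, h]; exact Nat.zero_le _⟩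
    obtain ⟨w, hw⟩ := exists_rank_eq (R i) x.pos
    exact Nat.le_zero.mp (hw ▸ h w)
  simp only [dictProb, htop]

theorem sum_dictProb {R : Profile n m} {i : Fin n} {w : Fin m} (hw : (R i w : ℕ) = 0)
    (U : Finset (Fin m)) : ∑ y ∈ U, dictProb R i y = if w ∈ U then 1 else 0 := by
  simp only [dictProb_eq_ite_rank, rank_eq_zero_iff_eq hw, sum_ite_eq]

/-- The combination of the dictatorial schemes with weights `c`. The weights need not sum to `1`, so
that this can be the dictatorial part of a scheme. -/
def dictMix (c : Fin n → ℝ) (R : Profile n m) (x : Fin m) : ℝ :=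
  ∑ i, c i * dictProb R i x

theorem sum_dictMix (hm : 0 < m) (c : Fin n → ℝ) (R : Profile n m) :
    ∑ x, dictMix c R x = ∑ i, c i := by
  simp only [dictMix]
  rw [sum_comm]
  refine sum_congr rfl fun i _ => ?_
  obtain ⟨w, hw⟩ := exists_rank_eq (R i) hm
  rw [← mul_sum, sum_dictProb hw, if_pos (mem_univ w), mul_one]

theorem dictMix_sub_dictMix (c : Fin n → ℝ) {R R' : Profile n m} {i : Fin n}
    (hR : ∀ j ≠ i, R j = R' j) (x : Fin m) :
    dictMix c R x - dictMix c R' x = c i * (dictProb R i x - dictProb R' i x) := by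
  rw [dictMix, dictMix, ← sum_sub_distrib, sum_eq_single_of_mem i (mem_univ i), mul_sub]
  intro j _ hj
  simp only [dictProb, hR j hj, sub_self]

theorem mul_dictMix {a : ℝ} {δ c : Fin n → ℝ} (h : ∀ i, a * δ i = c i) (R : Profile n m)
    (x : Fin m) : a * dictMix δ R x = dictMix c R x := by
  simp only [dictMix, mul_sum, ← mul_assoc, h]

end DictMix

section TopSwapGains

variable {n m : ℕ} {F : Profile n m → Fin m → ℝ} {i : Fin n}

/-- The possible values of `f(R^{i:yx}, y) - f(R, y)`, where voter `i` ranks `x` first and `y`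
second in `R`. Conditions (ii) and (iii) say that `γ_i` is the least element of this set. -/
def topSwapGains (F : Profile n m → Fin m → ℝ) (i : Fin n) : Set ℝ :=
  {t | ∃ (x y : Fin m) (R : Profile n m),
    (R i x : ℕ) = 0 ∧ (R i y : ℕ) = 1 ∧ F (swapTop R i x y) y - F R y = t}

theorem mem_lowerBounds_topSwapGains_iff {c : ℝ} :
    c ∈ lowerBounds (topSwapGains F i) ↔
      ∀ (x y : Fin m) (R : Profile n m), (R i x : ℕ) = 0 → (R i y : ℕ) = 1 →
        c ≤ F (swapTop R i x y) y - F R y :=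
  ⟨fun h x y R hx hy => h ⟨x, y, R, hx, hy, rfl⟩,
    fun h _ ⟨x, y, R, hx, hy, ht⟩ => ht ▸ h x y R hx hy⟩

theorem exists_isLeast_topSwapGains (hm : 2 ≤ m) (F : Profile n m → Fin m → ℝ) (i : Fin n) :
    ∃ c, IsLeast (topSwapGains F i) c := by
  have hfinite : (topSwapGains F i).Finite := by
    refine (Set.finite_range fun t : Fin m × Fin m × Profile n m =>
      F (swapTop t.2.2 i t.1 t.2.1) t.2.1 - F t.2.2 t.2.1).subset ?_
    rintro _ ⟨x, y, R, -, -, rfl⟩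
    exact ⟨(x, y, R), rfl⟩
  have hnonempty : (topSwapGains F i).Nonempty :=
    ⟨_, ⟨0, by omega⟩, ⟨1, hm⟩, fun _ => Equiv.refl _, rfl, rfl, rfl⟩
  exact hfinite.isCompact.exists_isLeast hnonempty

theorem apply_le_apply_swapTop (hF : IsSDS F) (hsp : Strategyproof F) {R : Profile n m}
    {x : Fin m} (hx : (R i x : ℕ) = 0) (y : Fin m) : F R y ≤ F (swapTop R i x y) y :=
  hsp.apply_le_apply_of_rank_eq_zero hF (fun _ hj => swapTop_of_ne _ _ _ _ hj)
    (by rw [swapTop_apply_right, hx])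

theorem nonneg_of_mem_topSwapGains (hF : IsSDS F) (hsp : Strategyproof F) {t : ℝ}
    (ht : t ∈ topSwapGains F i) : 0 ≤ t := by
  obtain ⟨x, y, R, hx, -, rfl⟩ := ht
  exact sub_nonneg.mpr (apply_le_apply_swapTop hF hsp hx y)

theorem apply_swapTop_add_le {c : ℝ} (hc : c ∈ lowerBounds (topSwapGains F i))
    {R : Profile n m} {x y : Fin m} (hx : (R i x : ℕ) = 0) (hy : (R i y : ℕ) = 1) :
    F (swapTop R i x y) x + c ≤ F R x := by
  have hgain := mem_lowerBounds_topSwapGains_iff.mp hc y x (swapTop R i x y)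
    (by rw [swapTop_apply_right, hx]) (by rw [swapTop_apply_left, hy])
  rw [swapTop_swapTop] at hgain
  linarith

end TopSwapGains

section DictatorialPart

variable {n m : ℕ} {F : Profile n m → Fin m → ℝ} {c : Fin n → ℝ}

theorem sum_le_apply_of_filter_eq (hm : 2 ≤ m) (hF : IsSDS F)
    (hc : ∀ i, c i ∈ lowerBounds (topSwapGains F i)) (x : Fin m) (S : Finset (Fin n))
    (R : Profile n m) (hS : univ.filter (fun i => (R i x : ℕ) = 0) = S) :
    ∑ i ∈ S, c i ≤ F R x := by
  induction S using Finset.induction_on generalizing R with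
  | empty => simpa using hF.1 R x
  | insert i S hiS ih =>
    have hx : (R i x : ℕ) = 0 := by
      simpa using hS.ge (mem_insert_self i S)
    obtain ⟨y, hy⟩ := exists_rank_eq (R i) hm
    have hswap : univ.filter (fun j => (swapTop R i x y j x : ℕ) = 0) = S := by
      rw [← erase_insert hiS, ← hS]
      ext j
      rcases eq_or_ne j i with rfl | hj
      · simp [swapTop_apply_left, hy]
      · simp [swapTop_of_ne _ _ _ _ hj, hj]
    rw [sum_insert hiS, add_comm]
    exact (add_le_add_left (ih _ hswap) _).trans (apply_swapTop_add_le (hc i) hx hy)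

theorem dictMix_le_apply (hm : 2 ≤ m) (hF : IsSDS F)
    (hc : ∀ i, c i ∈ lowerBounds (topSwapGains F i)) (R : Profile n m) (x : Fin m) :
    dictMix c R x ≤ F R x := by
  have h := sum_le_apply_of_filter_eq hm hF hc x _ R rfl
  rw [sum_filter] at h
  simpa only [dictMix, dictProb_eq_ite_rank, mul_ite, mul_one, mul_zero] using h

theorem sum_le_one_of_mem_lowerBounds (hm : 2 ≤ m) (hF : IsSDS F)
    (hc : ∀ i, c i ∈ lowerBounds (topSwapGains F i)) : ∑ i, c i ≤ 1 := by
  let R : Profile n m := fun _ => Equiv.refl _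
  calc ∑ i, c i = ∑ x, dictMix c R x := (sum_dictMix (by omega) c R).symm
    _ ≤ ∑ x, F R x := sum_le_sum fun x _ => dictMix_le_apply hm hF hc R x
    _ = 1 := hF.2 R

theorem sum_add_le_sum_swapTop (hF : IsSDS F) (hsp : Strategyproof F) {i : Fin n} {a : ℝ}
    (ha : a ∈ lowerBounds (topSwapGains F i)) {R : Profile n m} {U : Finset (Fin m)}
    {w z : Fin m} (hU : IsTopSet (R i) (insert z U)) (hzU : z ∉ U) (hwU : w ∈ U)
    (hz : (R i z : ℕ) = 0) (hw : (R i w : ℕ) = 1) :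
    ∑ y ∈ U, F R y + a ≤ ∑ y ∈ U, F (swapTop R i z w) y := by
  have hU' : IsTopSet (swapTop R i z w i) (insert z U) := by
    rw [swapTop_self]
    exact hU.trans_swap (mem_insert_self z U) (mem_insert_of_mem hwU)
  have hinsert := hsp.sum_le_sum_of_isTopSet hF (fun j hj => swapTop_of_ne R i z w hj) hU'
  have hloss := apply_swapTop_add_le ha hz hw
  rw [sum_insert hzU, sum_insert hzU] at hinsert
  linarith

theorem sum_add_le_sum_of_top_leaves (hF : IsSDS F) (hsp : Strategyproof F) {i : Fin n} {a : ℝ}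
    (ha : a ∈ lowerBounds (topSwapGains F i)) {R R' : Profile n m} (hR : ∀ j ≠ i, R j = R' j)
    {U : Finset (Fin m)} (hU : IsTopSet (R i) U) {w z : Fin m} (hw : (R i w : ℕ) = 0)
    (hwU : w ∈ U) (hz : (R' i z : ℕ) = 0) (hzU : z ∉ U) :
    ∑ y ∈ U, F R' y + a ≤ ∑ y ∈ U, F R y := by
  set Q : Profile n m := Function.update R i (moveToTop (R i) z)
  have hQi : Q i = moveToTop (R i) z := Function.update_self ..
  have hQ : ∀ j ≠ i, Q j = R j := fun j hj => Function.update_of_ne hj ..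
  have hQz : (Q i z : ℕ) = 0 := by rw [hQi, moveToTop_self]
  have hQw : (Q i w : ℕ) = 1 := by
    rw [hQi, moveToTop_of_rank_eq_zero hw (ne_of_mem_of_not_mem hwU hzU).symm]
  have hQU : IsTopSet (Q i) (insert z U) := hQi ▸ hU.insert_moveToTop z
  calc ∑ y ∈ U, F R' y + a
      ≤ ∑ y ∈ U, F Q y + a := by
        gcongr 1
        exact hsp.sum_le_sum_of_isTopSet_insert hF (fun j hj => (hQ j hj).trans (hR j hj))
          hQU hzU hz
    _ ≤ ∑ y ∈ U, F (swapTop Q i z w) y := sum_add_le_sum_swapTop hF hsp ha hQU hzU hwU hQz hQw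
    _ ≤ ∑ y ∈ U, F R y := hsp.sum_le_sum_of_isTopSet hF
        (fun j hj => ((swapTop_of_ne Q i z w hj).trans (hQ j hj)).symm) hU

theorem strategyproof_sub_dictMix (hF : IsSDS F) (hsp : Strategyproof F)
    (hc : ∀ i, c i ∈ lowerBounds (topSwapGains F i)) :
    Strategyproof fun R x => F R x - dictMix c R x := by
  intro R R' i hR x
  have hU := isTopSet_filter_lt (R i) x
  set U := univ.filter fun y => R i y < R i x
  obtain ⟨w, hw⟩ := exists_rank_eq (R i) x.pos
  obtain ⟨z, hz⟩ := exists_rank_eq (R' i) x.pos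
  have hmix : ∑ y ∈ U, dictMix c R y - ∑ y ∈ U, dictMix c R' y =
      c i * ((if w ∈ U then 1 else 0) - if z ∈ U then 1 else 0) := by
    simp only [← sum_sub_distrib, dictMix_sub_dictMix c hR, ← mul_sum]
    rw [sum_sub_distrib, sum_dictProb hw, sum_dictProb hz]
  simp only [sum_sub_distrib]
  by_cases hleaves : w ∈ U ∧ z ∉ U
  · have h := sum_add_le_sum_of_top_leaves hF hsp (hc i) hR hU hw hleaves.1 hz hleaves.2
    rw [if_pos hleaves.1, if_neg hleaves.2] at hmix
    linarith
  · have hiff : w ∈ U ↔ z ∈ U :=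
      ⟨fun hwU => by_contra fun hzU => hleaves ⟨hwU, hzU⟩,
        fun hzU => hU.mem_of_rank_eq_zero hzU hw⟩
    have h := hsp.sum_le_sum_of_isTopSet hF hR hU
    simp only [hiff, sub_self, mul_zero] at hmix
    linarith

theorem exists_strategyproof_eq_dictMix_add (hm : 2 ≤ m) (hF : IsSDS F) (hsp : Strategyproof F)
    (hc : ∀ i, c i ∈ lowerBounds (topSwapGains F i)) :
    ∃ g : Profile n m → Fin m → ℝ, IsSDS g ∧ Strategyproof g ∧
      ∀ R x, F R x = dictMix c R x + (1 - ∑ i, c i) * g R x := by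
  have hle := dictMix_le_apply hm hF hc
  have hsum := sum_dictMix (m := m) (by omega) c
  rcases (sum_le_one_of_mem_lowerBounds hm hF hc).eq_or_lt with hone | hlt
  · refine ⟨F, hF, hsp, fun R x => ?_⟩
    have heq : ∑ x, dictMix c R x = ∑ x, F R x := by rw [hsum, hF.2, hone]
    rw [(sum_eq_sum_iff_of_le fun x _ => hle R x).mp heq x (mem_univ x), hone]
    ring
  · have hpos : 0 < 1 - ∑ i, c i := sub_pos.mpr hlt
    refine ⟨fun R x => (F R x - dictMix c R x) / (1 - ∑ i, c i), ⟨fun R x => ?_, fun R => ?_⟩,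
      (strategyproof_sub_dictMix hF hsp hc).div_const hpos.le, fun R x => ?_⟩
    · exact div_nonneg (sub_nonneg.mpr (hle R x)) hpos.le
    · rw [← sum_div, sum_sub_distrib, hF.2, hsum, div_self hpos.ne']
    · rw [mul_div_cancel₀ _ hpos.ne', add_sub_cancel]

end DictatorialPart

section Degree

variable {n m : ℕ} {F : Profile n m → Fin m → ℝ} {c : Fin n → ℝ} {γ γ' : ℝ}

theorem exists_normalized_weights {ι : Type*} [Fintype ι] [Nonempty ι] {c : ι → ℝ}
    (hc : ∀ i, 0 ≤ c i) :
    ∃ δ : ι → ℝ, (∀ i, 0 ≤ δ i) ∧ ∑ i, δ i = 1 ∧ ∀ i, (∑ j, c j) * δ i = c i := by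
  classical
  have hsum_nonneg : 0 ≤ ∑ j, c j := sum_nonneg fun i _ => hc i
  rcases hsum_nonneg.eq_or_lt with hzero | hpos
  · have hc0 := (sum_eq_zero_iff_of_nonneg fun i _ => hc i).mp hzero.symm
    obtain ⟨k⟩ := ‹Nonempty ι›
    refine ⟨Pi.single k 1, fun i => ?_, by simp, fun i => ?_⟩
    · exact (Pi.single_nonneg.mpr zero_le_one : (0 : ι → ℝ) ≤ Pi.single k 1) i
    · rw [← hzero, zero_mul, hc0 i (mem_univ i)]
  · exact ⟨fun i => c i / ∑ j, c j, fun i => div_nonneg (hc i) hpos.le,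
      by rw [← sum_div, div_self hpos.ne'], fun i => mul_div_cancel₀ _ hpos.ne'⟩

theorem decomposesAt_sum_of_mem_lowerBounds (hn : 1 ≤ n) (hm : 2 ≤ m) (hF : IsSDS F)
    (hsp : Strategyproof F) (hc0 : ∀ i, 0 ≤ c i)
    (hc : ∀ i, c i ∈ lowerBounds (topSwapGains F i)) :
    DecomposesAt F (∑ i, c i) := by
  have : Nonempty (Fin n) := ⟨⟨0, hn⟩⟩
  obtain ⟨δ, hδ0, hδ1, hδc⟩ := exists_normalized_weights hc0
  obtain ⟨g, hg, hgsp, hFg⟩ := exists_strategyproof_eq_dictMix_add hm hF hsp hc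
  refine ⟨dictMix δ, g, ⟨δ, hδ0, hδ1, fun _ _ => rfl⟩, hg, hgsp, fun R x => ?_⟩
  rw [mul_dictMix hδc, hFg]

theorem DecomposesAt.exists_mem_lowerBounds (hγ : γ ≤ 1) (hF : DecomposesAt F γ) :
    ∃ c : Fin n → ℝ, ∑ i, c i = γ ∧ ∀ i, c i ∈ lowerBounds (topSwapGains F i) := by
  obtain ⟨d, g, ⟨δ, -, hδ1, hd⟩, hg, hgsp, hFdg⟩ := hF
  refine ⟨fun i => γ * δ i, by rw [← mul_sum, hδ1, mul_one], fun i => ?_⟩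
  rintro _ ⟨x, y, R, hx, hy, rfl⟩
  have hgain_d : d (swapTop R i x y) y - d R y = δ i := by
    rw [hd, hd]
    refine (dictMix_sub_dictMix δ (fun j hj => swapTop_of_ne R i x y hj) y).trans ?_
    simp [dictProb_eq_ite_rank, swapTop_apply_right, hx, hy]
  have hgain_g : 0 ≤ g (swapTop R i x y) y - g R y :=
    sub_nonneg.mpr (apply_le_apply_swapTop hg hgsp hx y)
  calc γ * δ i
      ≤ γ * δ i + (1 - γ) * (g (swapTop R i x y) y - g R y) :=
        le_add_of_nonneg_right (mul_nonneg (sub_nonneg.mpr hγ) hgain_g)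
    _ = F (swapTop R i x y) y - F R y := by
        rw [hFdg, hFdg, ← hgain_d]
        ring

theorem DecomposesAt.le_sum_of_mem_topSwapGains (hγ : γ ≤ 1) (hF : DecomposesAt F γ)
    (hc : ∀ i, c i ∈ topSwapGains F i) : γ ≤ ∑ i, c i := by
  obtain ⟨b, rfl, hb⟩ := hF.exists_mem_lowerBounds hγ
  exact sum_le_sum fun i _ => hb i (hc i)

theorem randDictDegree_sum_of_isLeast (hn : 1 ≤ n) (hm : 2 ≤ m) (hF : IsSDS F)
    (hsp : Strategyproof F) (hc : ∀ i, IsLeast (topSwapGains F i) (c i)) :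
    RandDictDegree F (∑ i, c i) := by
  have hc0 : ∀ i, 0 ≤ c i := fun i => nonneg_of_mem_topSwapGains hF hsp (hc i).1
  exact ⟨sum_nonneg fun i _ => hc0 i, sum_le_one_of_mem_lowerBounds hm hF fun i => (hc i).2,
    decomposesAt_sum_of_mem_lowerBounds hn hm hF hsp hc0 fun i => (hc i).2,
    fun _ _ hγ hdec => hdec.le_sum_of_mem_topSwapGains hγ fun i => (hc i).1⟩

theorem RandDictDegree.unique (h : RandDictDegree F γ) (h' : RandDictDegree F γ') : γ = γ' :=
  le_antisymm (h'.2.2.2 γ h.1 h.2.1 h.2.2.1) (h.2.2.2 γ' h'.1 h'.2.1 h'.2.2.1)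

end Degree

/-- A strategyproof SDS `F` is `γ`-randomly dictatorial iff there
are nonnegative reals `γ_1, …, γ_n` summing to `γ` such that (ii) whenever
voter `i` ranks `x` first and `y` second, pushing `y` to the top increases the
probability of `y` by at least `γ_i`, and (iii) for every voter `i` this bound
is attained for some profile and alternatives. -/
theorem randDictDegree_iff (n m : ℕ) (hn : 1 ≤ n) (hm : 2 ≤ m)
    (F : Profile n m → Fin m → ℝ) (hF : IsSDS F) (hsp : Strategyproof F)
    (γ : ℝ) :
    RandDictDegree F γ ↔
      ∃ gv : Fin n → ℝ, (∀ i, 0 ≤ gv i) ∧ ∑ i, gv i = γ ∧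
        (∀ (i : Fin n) (x y : Fin m) (R : Profile n m),
          (R i x : ℕ) = 0 → (R i y : ℕ) = 1 →
          gv i ≤ F (swapTop R i x y) y - F R y) ∧
        (∀ i : Fin n, ∃ (x y : Fin m) (R : Profile n m),
          (R i x : ℕ) = 0 ∧ (R i y : ℕ) = 1 ∧
          F (swapTop R i x y) y - F R y = gv i) := by
  constructor
  · intro hγ
    choose c hc using exists_isLeast_topSwapGains (n := n) hm F
    exact ⟨c, fun i => nonneg_of_mem_topSwapGains hF hsp (hc i).1,
      (randDictDegree_sum_of_isLeast hn hm hF hsp hc).unique hγ,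
      fun i => mem_lowerBounds_topSwapGains_iff.mp (hc i).2, fun i => (hc i).1⟩
  · rintro ⟨c, -, rfl, hlower, hattained⟩
    exact randDictDegree_sum_of_isLeast hn hm hF hsp fun i =>
      ⟨hattained i, mem_lowerBounds_topSwapGains_iff.mpr (hlower i)⟩
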